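/- Let Z ⊆ ℤ × ℤ be the set of pairs (a,b) with b = −1 or (a,b) ∈ {(-1,0), (-2,0), (-3,0), (-2,-2), (-3,-2), (-4,-2), (-2,1), (-3,-3)}. For a tuple (D₁,…,D₇) ∈ (ℤ×ℤ)⁷ set D₀ = (0,0), and call the tuple an exceptional pattern if Dᵢ − Dⱼ ∈ Z for all 0 ≤ i < j ≤ 7. Then (D₁,…,D₇) is an exceptional pattern if and only if there exists a ∈ ℤ such that (D₁,…,D₇) is one of the following twelve tuples: (1) ((1,0),(2,0),(3,0),(a,1),(a+1,1),(a+2,1),(a+3,1)); (2) ((1,0),(2,0),(a,1),(a+1,1),(a+2,1),(a+3,1),(4,2)); (3) ((1,0),(a,1),(a+1,1),(a+2,1),(a+3,1),(3,2),(4,2)); (4) ((a,1),(a+1,1),(a+2,1),(a+3,1),(2,2),(3,2),(4,2)); (5) ((-1,1),(0,1),(1,1),(2,2),(3,2),(4,2),(3,3)); (6) ((1,0),(2,0),(3,1),(4,1),(5,1),(4,2),(6,1)); (7) ((1,0),(2,1),(3,1),(4,1),(3,2),(5,1),(4,2)); (8) ((1,1),(2,1),(3,1),(2,2),(4,1),(3,2),(4,2));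 (9) ((1,0),(2,0),(1,1),(3,0),(2,1),(3,1),(4,1)); (10) ((1,0),(0,1),(2,0),(1,1),(2,1),(3,1),(4,2)); (11) ((-1,1),(1,0),(0,1),(1,1),(2,1),(3,2),(4,2)); (12) ((2,-1),(1,0),(2,0),(3,0),(4,1),(5,1),(6,1)). -/

import Mathlib

/-- The set of cohomologically zero classes on P_{P³}(O ⊕ O(1)). -/
def czSetE : Set (ℤ × ℤ) :=
  {p | p.2 = -1 ∨ p = (-1, 0) ∨ p = (-2, 0) ∨ p = (-3, 0) ∨ p = (-2, -2) ∨
       p = (-3, -2) ∨ p = (-4, -2) ∨ p = (-2, 1) ∨ p = (-3, -3)}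

/-!
The residue of `(a, b)` in the quotient of `ℤ × ℤ` by the lattice spanned by `(4, 0)` and the
anticanonical class `(5, 2)` is `2a + 3b mod 8`. It does not vanish on `Z`, so the eight members of
an exceptional pattern realize every residue modulo 8 exactly once. The residue of `(a, b)` has the
parity of `b`, and of the members whose level `b` has a given parity, all but the first one differ
from the first by `(k, 0)` or `(k + 1, 2)` with `1 ≤ k ≤ 3`. Hence the members of even level are
`(0, 0), …, (r, 0), (r + 2, 2), …, (4, 2)` for some `r`, and those of odd level are
`(a, 1), …, (a + 3, 1)`, except for the two quadruples that involve `(2, -1)` or `(3, 3)`.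

It remains to interleave the two quadruples. The order of two members is forced unless they differ
by `±(2, -1)`. The forced order gives the one-parameter families, and each possible inversion (of
`(a, 1)` with `(r, 0)`, which needs `a = r - 2`, or of `(a + 3, 1)` with `(r + 2, 2)`, which needs
`a = r + 1`) gives three sporadic patterns. The two exceptional odd quadruples give one each.
-/

theorem mem_czSetE_iff {p : ℤ × ℤ} :
    p ∈ czSetE ↔ p.2 = -1 ∨ (p.2 = 0 ∧ -3 ≤ p.1 ∧ p.1 ≤ -1) ∨
      (p.2 = -2 ∧ -4 ≤ p.1 ∧ p.1 ≤ -2) ∨ (p.2 = 1 ∧ p.1 = -2) ∨ (p.2 = -3 ∧ p.1 = -3) := by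
  simp only [czSetE, Set.mem_ofPred_eq, Prod.ext_iff]
  omega

/-- The class of `aH + bD` in the quotient of `ℤ × ℤ` by the lattice spanned by `(4, 0)` and the
anticanonical class `(5, 2)`, a cyclic group of order `8` which separates the members of an
exceptional pattern. -/
def residue (p : ℤ × ℤ) : ZMod 8 := ((2 * p.1 + 3 * p.2 : ℤ) : ZMod 8)

theorem residue_eq_residue_iff {p q : ℤ × ℤ} :
    residue p = residue q ↔ (8 : ℤ) ∣ 2 * (q.1 - p.1) + 3 * (q.2 - p.2) := by
  rw [residue, residue, ZMod.intCast_eq_intCast_iff_dvd_sub]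
  push_cast
  ring_nf

instance decidableMemCzSetE : DecidablePred (· ∈ czSetE) :=
  fun _ => decidable_of_iff _ mem_czSetE_iff.symm

theorem residue_ne_of_sub_mem_czSetE {p q : ℤ × ℤ} (h : p - q ∈ czSetE) :
    residue p ≠ residue q := by
  rw [mem_czSetE_iff, Prod.fst_sub, Prod.snd_sub] at h
  rw [Ne, residue_eq_residue_iff]
  omega

/-- The pairs `(i, j)` with `i < j` all satisfy `D i - D j ∈ Z`; for `ι = Fin 8` and `D 0 = 0` this
is the notion of an exceptional pattern. -/
def IsExceptional {ι : Type*} [LT ι] (D : ι → ℤ × ℤ) : Prop :=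
  ∀ i j, i < j → D i - D j ∈ czSetE

/-- The value `x` is taken by `D` at an earlier index than the value `y`. -/
def Precedes {ι α : Type*} [LT ι] (D : ι → α) (x y : α) : Prop :=
  ∃ i j, i < j ∧ D i = x ∧ D j = y

section Precedes

variable {ι α : Type*} [LinearOrder ι] {D : ι → α} {x y : α}

theorem Precedes.asymm (hD : Function.Injective D) (hxy : Precedes D x y) : ¬ Precedes D y x := by
  obtain ⟨i, j, hij, rfl, rfl⟩ := hxy
  rintro ⟨j', i', hji, hj, hi⟩
  obtain rfl := hD hi
  obtain rfl := hD hj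
  exact hij.not_gt hji

theorem precedes_or_precedes (hx : x ∈ Set.range D) (hy : y ∈ Set.range D) (hxy : x ≠ y) :
    Precedes D x y ∨ Precedes D y x := by
  obtain ⟨i, rfl⟩ := hx
  obtain ⟨j, rfl⟩ := hy
  exact (ne_of_apply_ne D hxy).lt_or_gt.imp (fun h => ⟨i, j, h, rfl, rfl⟩)
    fun h => ⟨j, i, h, rfl, rfl⟩

end Precedes

theorem precedes_of_apply_zero {n : ℕ} {α : Type*} {D : Fin (n + 1) → α} {x y : α} (hx : D 0 = x)
    (hy : y ∈ Set.range D) (hxy : x ≠ y) : Precedes D x y := by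
  obtain ⟨i, rfl⟩ := hy
  subst hx
  exact ⟨0, i, Fin.pos_of_ne_zero (ne_of_apply_ne D hxy).symm, rfl, rfl⟩

theorem isExceptional_vecEmpty : IsExceptional (![] : Fin 0 → ℤ × ℤ) := fun i => i.elim0

theorem isExceptional_vecCons {n : ℕ} {x : ℤ × ℤ} {D : Fin n → ℤ × ℤ} :
    IsExceptional (Matrix.vecCons x D) ↔ (∀ i, x - D i ∈ czSetE) ∧ IsExceptional D := by
  simp [IsExceptional, Fin.forall_fin_succ]

namespace IsExceptional

section LinearOrder

variable {ι : Type*} [LinearOrder ι] {D : ι → ℤ × ℤ} {x y : ℤ × ℤ}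

theorem residue_injective (hD : IsExceptional D) : Function.Injective fun i => residue (D i) := by
  intro i j hij
  rcases lt_trichotomy i j with h | h | h
  · exact absurd hij (residue_ne_of_sub_mem_czSetE (hD i j h))
  · exact h
  · exact absurd hij.symm (residue_ne_of_sub_mem_czSetE (hD j i h))

theorem injective (hD : IsExceptional D) : Function.Injective D :=
  hD.residue_injective.of_comp (f := residue)

theorem sub_mem_czSetE (hD : IsExceptional D) (h : Precedes D x y) : x - y ∈ czSetE := by
  obtain ⟨i, j, hij, rfl, rfl⟩ := h
  exact hD i j hij

theorem sub_mem_czSetE_or (hD : IsExceptional D) (hx : x ∈ Set.range D) (hy : y ∈ Set.range D)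
    (hxy : x ≠ y) : x - y ∈ czSetE ∨ y - x ∈ czSetE :=
  (precedes_or_precedes hx hy hxy).imp hD.sub_mem_czSetE hD.sub_mem_czSetE

end LinearOrder

/-- Two exceptional sequences with the same members can differ in order only through pairs whose
differences in both directions lie in `czSetE`. -/
theorem eq_of_forall_mem_range {n : ℕ} {D p : Fin (n + 1) → ℤ × ℤ} (hD : IsExceptional D)
    (hp : IsExceptional p) (hmem : ∀ k, p k ∈ Set.range D)
    (hlink : ∀ k : Fin n, p k.succ - p k.castSucc ∈ czSetE →
      Precedes D (p k.castSucc) (p k.succ)) : D = p := by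
  choose f hf using hmem
  have f_strictMono : StrictMono f := by
    refine Fin.strictMono_iff_lt_succ.2 fun k => ?_
    rcases lt_trichotomy (f k.castSucc) (f k.succ) with h | h | h
    · exact h
    · refine absurd (hp.injective ?_) k.castSucc_lt_succ.ne
      rw [← hf, h, hf]
    · have hsucc : Precedes D (p k.succ) (p k.castSucc) := ⟨_, _, h, hf _, hf _⟩
      exact absurd (hlink k (hD.sub_mem_czSetE hsucc)) (hsucc.asymm hD.injective)
  have f_eq_id : f = id := le_antisymm f_strictMono.le_id f_strictMono.id_le
  funext k
  rw [← hf, f_eq_id, id]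

variable {D : Fin 8 → ℤ × ℤ} {x y : ℤ × ℤ}

theorem residue_surjective (hD : IsExceptional D) :
    Function.Surjective fun i => residue (D i) :=
  (hD.residue_injective.bijective_of_nat_card_le (by simp)).surjective

/-- The residue of `(x, (D i).2)` is taken after `D i`, where only these two points have it. -/
theorem mem_range_or_of_first (hD : IsExceptional D) {i : Fin 8}
    (hi : ∀ j < i, Odd ((D j).2 - (D i).2)) {x : ℤ} (hx : (D i).1 < x) (hx' : x ≤ (D i).1 + 3) :
    (x, (D i).2) ∈ Set.range D ∨ (x + 1, (D i).2 + 2) ∈ Set.range D := by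
  obtain ⟨j, hj⟩ := hD.residue_surjective (residue (x, (D i).2))
  simp only [residue_eq_residue_iff] at hj
  have hij : i < j := by
    rcases lt_trichotomy i j with h | rfl | h
    · exact h
    · omega
    · obtain ⟨m, hm⟩ := hi j h
      omega
  have hsub := hD i j hij
  rw [mem_czSetE_iff, Prod.fst_sub, Prod.snd_sub] at hsub
  have hDj : D j = (x, (D i).2) ∨ D j = (x + 1, (D i).2 + 2) := by
    simp only [Prod.ext_iff]
    omega
  exact hDj.imp (fun h => ⟨j, h⟩) fun h => ⟨j, h⟩

theorem mem_range_level_zero_or (hD : IsExceptional D) (hD0 : D 0 = 0) {x : ℤ} (hx₁ : 1 ≤ x)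
    (hx₃ : x ≤ 3) : (x, 0) ∈ Set.range D ∨ (x + 1, 2) ∈ Set.range D := by
  simpa [hD0] using
    hD.mem_range_or_of_first (i := 0) (x := x) (by simp) (by simpa [hD0]) (by simpa [hD0])

theorem neg_mem_czSetE (hD : IsExceptional D) (hD0 : D 0 = 0) (hx : x ∈ Set.range D)
    (hx0 : x ≠ 0) : -x ∈ czSetE := by
  simpa using hD.sub_mem_czSetE (precedes_of_apply_zero hD0 hx hx0.symm)

theorem exists_first_odd (hD : IsExceptional D) (hD0 : D 0 = 0) :
    ∃ i, (∀ j < i, Odd ((D j).2 - (D i).2)) ∧ (D i = (2, -1) ∨ (D i).2 = 1 ∨ D i = (3, 3)) := by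
  obtain ⟨i₀, hi₀⟩ := hD.residue_surjective (residue (0, 1))
  simp only [residue_eq_residue_iff] at hi₀
  have exists_odd : {i | Odd (D i).2}.Nonempty := ⟨i₀, by
    rw [Set.mem_ofPred_eq, Int.odd_iff]
    omega⟩
  obtain ⟨i, hi, hmin⟩ := wellFounded_lt.has_min _ exists_odd
  refine ⟨i, fun j hj => (Int.not_odd_iff_even.1 fun h => hmin j h hj).sub_odd hi, ?_⟩
  have hDi := hD.neg_mem_czSetE hD0 ⟨i, rfl⟩ fun h => by simp [h] at hi
  rw [mem_czSetE_iff, Prod.fst_neg, Prod.snd_neg] at hDi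
  obtain ⟨m, hm⟩ := hi
  simp only [Prod.ext_iff]
  omega

theorem eq_two_of_mem_range (hD : IsExceptional D) (hD0 : D 0 = 0) {x : ℤ}
    (hx : (x, -1) ∈ Set.range D) : x = 2 := by
  have hneg := hD.neg_mem_czSetE hD0 hx (by simp [Prod.ext_iff])
  simp only [mem_czSetE_iff, Prod.fst_neg, Prod.snd_neg] at hneg
  omega

theorem eq_three_of_mem_range (hD : IsExceptional D) (hD0 : D 0 = 0) {x : ℤ}
    (hx : (x, 3) ∈ Set.range D) : x = 3 := by
  have hneg := hD.neg_mem_czSetE hD0 hx (by simp [Prod.ext_iff])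
  simp only [mem_czSetE_iff, Prod.fst_neg, Prod.snd_neg] at hneg
  omega

theorem not_mem_range_level_five (hD : IsExceptional D) (hD0 : D 0 = 0) {x : ℤ} :
    (x, 5) ∉ Set.range D := by
  intro hx
  have hneg := hD.neg_mem_czSetE hD0 hx (by simp [Prod.ext_iff])
  simp [mem_czSetE_iff] at hneg

theorem level_one_of_first_eq (hD : IsExceptional D) (hD0 : D 0 = 0) {i : Fin 8}
    (hi : ∀ j < i, Odd ((D j).2 - (D i).2)) (hDi : D i = (2, -1)) {x : ℤ} (hx₄ : 4 ≤ x)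
    (hx₆ : x ≤ 6) : (x, 1) ∈ Set.range D := by
  have next := hD.mem_range_or_of_first hi (x := x - 1)
  simp only [hDi, sub_add_cancel] at next
  refine (next (by omega) (by omega)).resolve_left fun h => ?_
  have := hD.eq_two_of_mem_range hD0 h
  omega

theorem first_ne_three_three (hD : IsExceptional D) (hD0 : D 0 = 0) {i : Fin 8}
    (hi : ∀ j < i, Odd ((D j).2 - (D i).2)) : D i ≠ (3, 3) := by
  intro hDi
  have next := hD.mem_range_or_of_first hi (x := 4)
  simp only [hDi] at next
  rcases next (by simp) (by simp) with h | h
  · simpa using hD.eq_three_of_mem_range hD0 h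
  · exact hD.not_mem_range_level_five hD0 h

theorem fst_first_of_three_three_mem_range (hD : IsExceptional D) (hD0 : D 0 = 0) {i : Fin 8}
    (hi : ∀ j < i, Odd ((D j).2 - (D i).2)) (hDi : (D i).2 = 1)
    (h₃₃ : (3, 3) ∈ Set.range D) : (D i).1 = -1 := by
  have hbounds (x : ℤ) (hx : (x, 1) ∈ Set.range D) : -1 ≤ x ∧ x ≤ 1 := by
    have := hD.sub_mem_czSetE_or hx h₃₃ (by simp)
    simp only [mem_czSetE_iff, Prod.mk_sub_mk] at this
    omega
  have hle := hbounds (D i).1 ⟨i, Prod.ext rfl hDi⟩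
  by_contra hne
  have next := hD.mem_range_or_of_first hi (x := 3) (by omega) (by omega)
  rw [hDi] at next
  rcases next with h | h
  · have := hbounds 3 h
    omega
  · simpa using hD.eq_three_of_mem_range hD0 h

theorem level_one_of_first (hD : IsExceptional D) (hD0 : D 0 = 0) {i : Fin 8}
    (hi : ∀ j < i, Odd ((D j).2 - (D i).2)) (hDi : (D i).2 = 1) {x : ℤ} (hx : (D i).1 ≤ x)
    (hx' : x ≤ (D i).1 + 3) (h₃₃ : x = 2 → (3, 3) ∉ Set.range D) : (x, 1) ∈ Set.range D := by
  obtain rfl | hx := hx.eq_or_lt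
  · exact ⟨i, Prod.ext rfl hDi⟩
  · have next := hD.mem_range_or_of_first hi hx hx'
    rw [hDi] at next
    refine next.resolve_right fun h => ?_
    obtain rfl : x = 2 := by
      have := hD.eq_three_of_mem_range hD0 h
      omega
    exact h₃₃ rfl h

theorem odd_members (hD : IsExceptional D) (hD0 : D 0 = 0) :
    ((2, -1) ∈ Set.range D ∧ ∀ x, 4 ≤ x → x ≤ 6 → (x, 1) ∈ Set.range D) ∨
      ((3, 3) ∈ Set.range D ∧ ∀ x, -1 ≤ x → x ≤ 1 → (x, 1) ∈ Set.range D) ∨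
      ∃ a, ∀ x, a ≤ x → x ≤ a + 3 → (x, 1) ∈ Set.range D := by
  obtain ⟨i, hi, hDi | hDi | hDi⟩ := hD.exists_first_odd hD0
  · exact .inl ⟨⟨i, hDi⟩, fun x => hD.level_one_of_first_eq hD0 hi hDi⟩
  · right
    by_cases h₃₃ : (3, 3) ∈ Set.range D
    · have hfst := hD.fst_first_of_three_three_mem_range hD0 hi hDi h₃₃
      exact .inl ⟨h₃₃, fun x hx hx' => hD.level_one_of_first hD0 hi hDi (by omega) (by omega)
        (by omega)⟩
    · exact .inr ⟨(D i).1, fun x hx hx' => hD.level_one_of_first hD0 hi hDi hx hx' fun _ => h₃₃⟩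
  · exact absurd hDi (hD.first_ne_three_three hD0 hi)

theorem even_members (hD : IsExceptional D) (hD0 : D 0 = 0) :
    ∃ r : ℤ, 0 ≤ r ∧ r ≤ 3 ∧ (∀ x, 0 ≤ x → x ≤ r → (x, 0) ∈ Set.range D) ∧
      ∀ x, r + 2 ≤ x → x ≤ 4 → (x, 2) ∈ Set.range D := by
  have upward (x y : ℤ) (hx : (x, 0) ∈ Set.range D) (hy : (y, 2) ∈ Set.range D) : x + 2 ≤ y := by
    have := hD.sub_mem_czSetE_or hx hy (by simp)
    simp only [mem_czSetE_iff, Prod.mk_sub_mk] at this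
    omega
  obtain ⟨r, ⟨hr₀, hr₃, hr⟩, hmax⟩ :=
    Int.exists_greatest_of_bdd (P := fun x => 0 ≤ x ∧ x ≤ 3 ∧ (x, 0) ∈ Set.range D)
      ⟨3, fun x hx => hx.2.1⟩ ⟨0, le_rfl, by simp, 0, hD0⟩
  refine ⟨r, hr₀, hr₃, fun x hx₀ hxr => ?_, fun x hrx hx₄ => ?_⟩
  · obtain rfl | hx₀ := hx₀.eq_or_lt
    · exact ⟨0, hD0⟩
    · refine (hD.mem_range_level_zero_or hD0 (by omega) (by omega)).resolve_right fun h => ?_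
      have := upward r (x + 1) hr h
      omega
  · have h := hD.mem_range_level_zero_or hD0 (x := x - 1) (by omega) (by omega)
    rw [sub_add_cancel] at h
    refine h.resolve_left fun h => ?_
    have := hmax (x - 1) ⟨by omega, by omega, h⟩
    omega

end IsExceptional

/-- The four one-parameter families of the classification; `familyPattern a k` is number `k + 1`. -/
def familyPattern (a : ℤ) : Fin 4 → Fin 8 → ℤ × ℤ :=
  ![![(0, 0), (1, 0), (2, 0), (3, 0), (a, 1), (a + 1, 1), (a + 2, 1), (a + 3, 1)],
    ![(0, 0), (1, 0), (2, 0), (a, 1), (a + 1, 1), (a + 2, 1), (a + 3, 1), (4, 2)],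
    ![(0, 0), (1, 0), (a, 1), (a + 1, 1), (a + 2, 1), (a + 3, 1), (3, 2), (4, 2)],
    ![(0, 0), (a, 1), (a + 1, 1), (a + 2, 1), (a + 3, 1), (2, 2), (3, 2), (4, 2)]]

/-- The eight sporadic patterns of the classification; `sporadicPattern k` is number `k + 5`. -/
def sporadicPattern : Fin 8 → Fin 8 → ℤ × ℤ :=
  ![![(0, 0), (-1, 1), (0, 1), (1, 1), (2, 2), (3, 2), (4, 2), (3, 3)],
    ![(0, 0), (1, 0), (2, 0), (3, 1), (4, 1), (5, 1), (4, 2), (6, 1)],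
    ![(0, 0), (1, 0), (2, 1), (3, 1), (4, 1), (3, 2), (5, 1), (4, 2)],
    ![(0, 0), (1, 1), (2, 1), (3, 1), (2, 2), (4, 1), (3, 2), (4, 2)],
    ![(0, 0), (1, 0), (2, 0), (1, 1), (3, 0), (2, 1), (3, 1), (4, 1)],
    ![(0, 0), (1, 0), (0, 1), (2, 0), (1, 1), (2, 1), (3, 1), (4, 2)],
    ![(0, 0), (-1, 1), (1, 0), (0, 1), (1, 1), (2, 1), (3, 2), (4, 2)],
    ![(0, 0), (2, -1), (1, 0), (2, 0), (3, 0), (4, 1), (5, 1), (6, 1)]]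

theorem isExceptional_familyPattern (a : ℤ) (k : Fin 4) : IsExceptional (familyPattern a k) := by
  fin_cases k <;>
    simp [familyPattern, isExceptional_vecCons, isExceptional_vecEmpty, mem_czSetE_iff,
      Fin.forall_fin_succ] <;>
    omega

theorem isExceptional_sporadicPattern (k : Fin 8) : IsExceptional (sporadicPattern k) := by
  revert k
  unfold IsExceptional
  decide

/-- The values `(0, 0), …, (r, 0)`, `(a, 1), …, (a + 3, 1)` and `(r + 2, 2), …, (4, 2)` are taken
by `D`, in an order that is left open. -/
structure HasLevels (D : Fin 8 → ℤ × ℤ) (r a : ℤ) : Prop where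
  nonneg : 0 ≤ r
  le_three : r ≤ 3
  level_zero : ∀ x, 0 ≤ x → x ≤ r → (x, 0) ∈ Set.range D
  level_one : ∀ x, a ≤ x → x ≤ a + 3 → (x, 1) ∈ Set.range D
  level_two : ∀ x, r + 2 ≤ x → x ≤ 4 → (x, 2) ∈ Set.range D

namespace HasLevels

variable {D : Fin 8 → ℤ × ℤ} {a r : ℤ}

theorem eq_familyPattern (h : HasLevels D r a) (hD : IsExceptional D)
    (h₀₁ : Precedes D (r, 0) (a, 1)) (h₁₂ : r ≤ 2 → Precedes D (a + 3, 1) (r + 2, 2)) :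
    ∃ k, D = familyPattern a k := by
  obtain ⟨hr₀, hr₃, level₀, level₁, level₂⟩ := h
  obtain ⟨k, hk⟩ : ∃ k : Fin 4, r = 3 - k := ⟨⟨(3 - r).toNat, by omega⟩, by grind⟩
  refine ⟨k, hD.eq_of_forall_mem_range (isExceptional_familyPattern a _) ?_ ?_⟩
  · fin_cases k <;> simp only [Fin.forall_fin_succ] <;>
      simp_all [familyPattern, -Set.mem_range]
  · fin_cases k <;> simp only [Fin.forall_fin_succ] <;>
      simp_all -contextual [familyPattern, mem_czSetE_iff]

theorem eq_sporadicPattern_of_precedes_zero (h : HasLevels D r a) (hD : IsExceptional D)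
    (hD0 : D 0 = 0) (h₁₀ : Precedes D (a, 1) (r, 0)) : ∃ k, D = sporadicPattern k := by
  have hr : r ≠ 0 := by
    rintro rfl
    have h₀₁ := precedes_of_apply_zero hD0 (h.level_one a le_rfl (by simp))
      (by simp [Prod.ext_iff])
    exact h₁₀.asymm hD.injective h₀₁
  obtain rfl : r = a + 2 := by
    have := hD.sub_mem_czSetE h₁₀
    simp only [mem_czSetE_iff, Prod.fst_sub, Prod.snd_sub] at this
    omega
  obtain ⟨hr₀, hr₃, level₀, level₁, level₂⟩ := h
  obtain rfl | rfl | rfl : a = -1 ∨ a = 0 ∨ a = 1 := by omega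
  on_goal 1 => use 6
  on_goal 2 => use 5
  on_goal 3 => use 4
  all_goals
    refine hD.eq_of_forall_mem_range (isExceptional_sporadicPattern _) ?_ ?_ <;>
    simp only [Fin.forall_fin_succ] <;>
    simp_all [sporadicPattern, mem_czSetE_iff, -Set.mem_range]

theorem eq_sporadicPattern_of_precedes_one (h : HasLevels D r a) (hD : IsExceptional D)
    (hr₂ : r ≤ 2) (h₂₁ : Precedes D (r + 2, 2) (a + 3, 1)) : ∃ k, D = sporadicPattern k := by
  obtain rfl : a = r + 1 := by
    have := hD.sub_mem_czSetE h₂₁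
    simp only [mem_czSetE_iff, Prod.fst_sub, Prod.snd_sub] at this
    omega
  obtain ⟨hr₀, -, level₀, level₁, level₂⟩ := h
  obtain rfl | rfl | rfl : r = 0 ∨ r = 1 ∨ r = 2 := by omega
  on_goal 1 => use 3
  on_goal 2 => use 2
  on_goal 3 => use 1
  all_goals
    refine hD.eq_of_forall_mem_range (isExceptional_sporadicPattern _) ?_ ?_ <;>
    simp only [Fin.forall_fin_succ] <;>
    simp_all [sporadicPattern, mem_czSetE_iff, -Set.mem_range]

theorem eq_pattern (h : HasLevels D r a) (hD : IsExceptional D) (hD0 : D 0 = 0) :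
    (∃ k, D = familyPattern a k) ∨ ∃ k, D = sporadicPattern k := by
  have hr := h.level_zero r h.nonneg le_rfl
  have ha := h.level_one a le_rfl (by simp)
  rcases precedes_or_precedes hr ha (by simp) with h₀₁ | h₁₀
  · by_cases h₂₁ : r ≤ 2 ∧ Precedes D (r + 2, 2) (a + 3, 1)
    · exact .inr (h.eq_sporadicPattern_of_precedes_one hD h₂₁.1 h₂₁.2)
    · refine .inl (h.eq_familyPattern hD h₀₁ fun hr₂ => ?_)
      have ha₃ := h.level_one (a + 3) (by simp) le_rfl
      have hr₂' := h.level_two (r + 2) le_rfl (by omega)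
      exact (precedes_or_precedes ha₃ hr₂' (by simp)).resolve_right fun h' => h₂₁ ⟨hr₂, h'⟩
  · exact .inr (h.eq_sporadicPattern_of_precedes_zero hD hD0 h₁₀)

end HasLevels

namespace IsExceptional

variable {D : Fin 8 → ℤ × ℤ}

theorem eq_sporadicPattern_seven (hD : IsExceptional D) (hD0 : D 0 = 0)
    (h : (2, -1) ∈ Set.range D) (h₁ : ∀ x, 4 ≤ x → x ≤ 6 → (x, 1) ∈ Set.range D) :
    D = sporadicPattern 7 := by
  have level₀ (x : ℤ) (hx₁ : 1 ≤ x) (hx₃ : x ≤ 3) : (x, 0) ∈ Set.range D := by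
    refine (hD.mem_range_level_zero_or hD0 hx₁ hx₃).resolve_right fun h₂ => ?_
    have := hD.sub_mem_czSetE_or h h₂ (by simp)
    simp only [mem_czSetE_iff, Prod.mk_sub_mk] at this
    omega
  have hlink : Precedes D (0, 0) (2, -1) := precedes_of_apply_zero hD0 h (by simp)
  have hzero : (0, 0) ∈ Set.range D := ⟨0, hD0⟩
  refine hD.eq_of_forall_mem_range (isExceptional_sporadicPattern 7) ?_ ?_ <;>
    simp only [Fin.forall_fin_succ] <;>
    simp [sporadicPattern, mem_czSetE_iff, -Set.mem_range, *]

theorem eq_sporadicPattern_zero (hD : IsExceptional D) (hD0 : D 0 = 0)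
    (h : (3, 3) ∈ Set.range D) (h₁ : ∀ x, -1 ≤ x → x ≤ 1 → (x, 1) ∈ Set.range D) :
    D = sporadicPattern 0 := by
  have level₂ (x : ℤ) (hx₁ : 2 ≤ x) (hx₃ : x ≤ 4) : (x, 2) ∈ Set.range D := by
    have hx := hD.mem_range_level_zero_or hD0 (x := x - 1) (by omega) (by omega)
    rw [sub_add_cancel] at hx
    refine hx.resolve_left fun h₀ => ?_
    have := hD.sub_mem_czSetE_or h h₀ (by simp)
    simp only [mem_czSetE_iff, Prod.mk_sub_mk] at this
    omega
  have hzero : (0, 0) ∈ Set.range D := ⟨0, hD0⟩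
  refine hD.eq_of_forall_mem_range (isExceptional_sporadicPattern 0) ?_ ?_ <;>
    simp only [Fin.forall_fin_succ] <;>
    simp [sporadicPattern, mem_czSetE_iff, -Set.mem_range, *]

theorem eq_pattern (hD : IsExceptional D) (hD0 : D 0 = 0) :
    (∃ a k, D = familyPattern a k) ∨ ∃ k, D = sporadicPattern k := by
  rcases hD.odd_members hD0 with ⟨h, h₁⟩ | ⟨h, h₁⟩ | ⟨a, h₁⟩
  · exact .inr ⟨7, hD.eq_sporadicPattern_seven hD0 h h₁⟩
  · exact .inr ⟨0, hD.eq_sporadicPattern_zero hD0 h h₁⟩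
  · obtain ⟨r, hr₀, hr₃, h₀, h₂⟩ := hD.even_members hD0
    exact (HasLevels.eq_pattern ⟨hr₀, hr₃, h₀, h₁, h₂⟩ hD hD0).imp_left fun h => ⟨a, h⟩

end IsExceptional

theorem isExceptional_iff_eq_pattern {D : Fin 8 → ℤ × ℤ} (hD0 : D 0 = 0) :
    IsExceptional D ↔ (∃ a k, D = familyPattern a k) ∨ ∃ k, D = sporadicPattern k := by
  refine ⟨fun hD => hD.eq_pattern hD0, ?_⟩
  rintro (⟨a, k, rfl⟩ | ⟨k, rfl⟩)
  · exact isExceptional_familyPattern a k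
  · exact isExceptional_sporadicPattern k

theorem eq_vec_iff {α : Type*} {D : Fin 8 → α} {x p₁ p₂ p₃ p₄ p₅ p₆ p₇ : α} (hD0 : D 0 = x) :
    D = ![x, p₁, p₂, p₃, p₄, p₅, p₆, p₇] ↔
      (D 1, D 2, D 3, D 4, D 5, D 6, D 7) = (p₁, p₂, p₃, p₄, p₅, p₆, p₇) := by
  simp [funext_iff, Fin.forall_fin_succ, hD0]

/-- Classification of exceptional patterns of length 8 on P_{P³}(O ⊕ O(1)):
with D₀ = (0,0), we have Dᵢ − Dⱼ ∈ Z for all 0 ≤ i < j ≤ 7 iff the tuple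
(D₁,…,D₇) is one of the twelve listed families. -/
theorem exceptional_pattern_classification_PP3_O1
    (D : Fin 8 → ℤ × ℤ) (hD0 : D 0 = (0, 0)) :
    (∀ i j : Fin 8, i < j → D i - D j ∈ czSetE) ↔
      ∃ a : ℤ,
        (D 1, D 2, D 3, D 4, D 5, D 6, D 7) =
          ((1, 0), (2, 0), (3, 0), (a, 1), (a + 1, 1), (a + 2, 1), (a + 3, 1)) ∨
        (D 1, D 2, D 3, D 4, D 5, D 6, D 7) =
          ((1, 0), (2, 0), (a, 1), (a + 1, 1), (a + 2, 1), (a + 3, 1), (4, 2)) ∨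
        (D 1, D 2, D 3, D 4, D 5, D 6, D 7) =
          ((1, 0), (a, 1), (a + 1, 1), (a + 2, 1), (a + 3, 1), (3, 2), (4, 2)) ∨
        (D 1, D 2, D 3, D 4, D 5, D 6, D 7) =
          ((a, 1), (a + 1, 1), (a + 2, 1), (a + 3, 1), (2, 2), (3, 2), (4, 2)) ∨
        (D 1, D 2, D 3, D 4, D 5, D 6, D 7) =
          ((-1, 1), (0, 1), (1, 1), (2, 2), (3, 2), (4, 2), (3, 3)) ∨
        (D 1, D 2, D 3, D 4, D 5, D 6, D 7) =
          ((1, 0), (2, 0), (3, 1), (4, 1), (5, 1), (4, 2), (6, 1)) ∨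
        (D 1, D 2, D 3, D 4, D 5, D 6, D 7) =
          ((1, 0), (2, 1), (3, 1), (4, 1), (3, 2), (5, 1), (4, 2)) ∨
        (D 1, D 2, D 3, D 4, D 5, D 6, D 7) =
          ((1, 1), (2, 1), (3, 1), (2, 2), (4, 1), (3, 2), (4, 2)) ∨
        (D 1, D 2, D 3, D 4, D 5, D 6, D 7) =
          ((1, 0), (2, 0), (1, 1), (3, 0), (2, 1), (3, 1), (4, 1)) ∨
        (D 1, D 2, D 3, D 4, D 5, D 6, D 7) =
          ((1, 0), (0, 1), (2, 0), (1, 1), (2, 1), (3, 1), (4, 2)) ∨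
        (D 1, D 2, D 3, D 4, D 5, D 6, D 7) =
          ((-1, 1), (1, 0), (0, 1), (1, 1), (2, 1), (3, 2), (4, 2)) ∨
        (D 1, D 2, D 3, D 4, D 5, D 6, D 7) =
          ((2, -1), (1, 0), (2, 0), (3, 0), (4, 1), (5, 1), (6, 1)) := by
  rw [← IsExceptional, isExceptional_iff_eq_pattern hD0]
  simp only [← eq_vec_iff hD0]
  simp [Fin.exists_fin_succ, familyPattern, sporadicPattern, exists_or, or_assoc]
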